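/- arXiv:2508.06285 — 2 statements merged into one kernel-verified Lean document; each statement's English description precedes it below -/
import Mathlib

section
/- Equality holds in the reverse Finsler–Hadwiger inequality a² + b² + c² ≤ 3[(a−b)² + (b−c)² + (c−a)²] + 4√3·S if and only if the triangle is equilateral (a = b = c) or is a degenerate isosceles triangle in which one side equals the sum of the two others which are equal (up to permutation, b = c = a/2). -/
/-!
In the Ravi variables `x = -a + b + c`, `y = a - b + c`, `z = a + b - c`, put
`Q = 2 (xy + yz + zx) - (x² + y² + z²)` and `T = 4√3·S`. The equality becomes `Q = T`, while
Heron's formula becomes `T² = 3 (x + y + z) xyz`. Schur's inequality `(x + y + z) Q ≤ 9 xyz`,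
multiplied by `x + y + z`, turns `Q = T` into `(x + y + z)² T ≤ 3 T²`. As
`(x + y + z)² - 3 Q = 2 ((x - y)² + (y - z)² + (z - x)²)` is nonnegative, either `x = y = z`, or
`T = 0` and then one of the variables vanishes while the other two agree.
-/

theorem zero_and_eq_of_mul_eq_zero_of_two_mul_sub_sq_eq_zero {R : Type*} [CommRing R]
    [NoZeroDivisors R] {x y z : R} (hxyz : x * y * z = 0)
    (h : 2 * (x * y + y * z + z * x) - (x ^ 2 + y ^ 2 + z ^ 2) = 0) :
    (x = 0 ∧ y = z) ∨ (y = 0 ∧ z = x) ∨ (z = 0 ∧ x = y) := by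
  have eq_of_sq {u v : R} (huv : (u - v) ^ 2 = 0) : u = v := sub_eq_zero.1 (sq_eq_zero_iff.1 huv)
  rcases mul_eq_zero.1 hxyz with hxy | rfl
  · rcases mul_eq_zero.1 hxy with rfl | rfl
    · exact .inl ⟨rfl, eq_of_sq (by linear_combination -h)⟩
    · exact .inr (.inl ⟨rfl, eq_of_sq (by linear_combination -h)⟩)
  · exact .inr (.inr ⟨rfl, eq_of_sq (by linear_combination -h)⟩)

section OrderedRing

variable {R : Type*} [CommRing R] [LinearOrder R] [IsStrictOrderedRing R] {x y z : R}

theorem schur_inequality_of_le_of_le (n : ℕ) (hz : 0 ≤ z) (hzy : z ≤ y) (hyx : y ≤ x) :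
    0 ≤ x ^ n * ((x - y) * (x - z)) + y ^ n * ((y - x) * (y - z)) +
      z ^ n * ((z - x) * (z - y)) := by
  have hy : 0 ≤ y := hz.trans hzy
  have hx : 0 ≤ x := hy.trans hyx
  have hyz : 0 ≤ y - z := sub_nonneg.2 hzy
  have hxz : 0 ≤ x - z := sub_nonneg.2 (hzy.trans hyx)
  have hmono : y ^ n * (y - z) ≤ x ^ n * (x - z) := by gcongr
  calc 0 ≤ (x - y) * (x ^ n * (x - z) - y ^ n * (y - z)) + z ^ n * ((x - z) * (y - z)) :=
        add_nonneg (mul_nonneg (sub_nonneg.2 hyx) (sub_nonneg.2 hmono))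
          (mul_nonneg (pow_nonneg hz n) (mul_nonneg hxz hyz))
    _ = _ := by ring

theorem schur_inequality (n : ℕ) (hx : 0 ≤ x) (hy : 0 ≤ y) (hz : 0 ≤ z) :
    0 ≤ x ^ n * ((x - y) * (x - z)) + y ^ n * ((y - x) * (y - z)) +
      z ^ n * ((z - x) * (z - y)) := by
  wlog hyx : y ≤ x generalizing x y
  · linarith [this hy hx (le_of_not_ge hyx)]
  rcases le_total z y with hzy | hyz
  · exact schur_inequality_of_le_of_le n hz hzy hyx
  · rcases le_total z x with hzx | hxz
    · linarith [schur_inequality_of_le_of_le n hy hyz hzx]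
    · linarith [schur_inequality_of_le_of_le n hy hyx hxz]

theorem add_mul_two_mul_sub_sq_le_nine_mul (hx : 0 ≤ x) (hy : 0 ≤ y) (hz : 0 ≤ z) :
    (x + y + z) * (2 * (x * y + y * z + z * x) - (x ^ 2 + y ^ 2 + z ^ 2)) ≤ 9 * (x * y * z) := by
  linarith [schur_inequality 1 hx hy hz]

theorem eq_and_eq_of_sq_add_le_three_mul
    (h : (x + y + z) ^ 2 ≤ 3 * (2 * (x * y + y * z + z * x) - (x ^ 2 + y ^ 2 + z ^ 2))) :
    x = y ∧ y = z := by
  have hsum : (x - y) ^ 2 + (y - z) ^ 2 + (z - x) ^ 2 ≤ 0 := by linarith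
  have hxy : (x - y) ^ 2 = 0 := by
    linarith [hsum, sq_nonneg (x - y), sq_nonneg (y - z), sq_nonneg (z - x)]
  have hyz : (y - z) ^ 2 = 0 := by
    linarith [hsum, sq_nonneg (x - y), sq_nonneg (y - z), sq_nonneg (z - x)]
  exact ⟨sub_eq_zero.1 (sq_eq_zero_iff.1 hxy), sub_eq_zero.1 (sq_eq_zero_iff.1 hyz)⟩

theorem eq_zero_or_eq_and_eq_of_two_mul_sub_sq_eq {T : R} (hx : 0 ≤ x) (hy : 0 ≤ y) (hz : 0 ≤ z)
    (hT : 0 ≤ T) (hT_sq : T ^ 2 = 3 * ((x + y + z) * (x * y * z)))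
    (h : 2 * (x * y + y * z + z * x) - (x ^ 2 + y ^ 2 + z ^ 2) = T) :
    T = 0 ∨ (x = y ∧ y = z) := by
  refine hT.eq_or_lt.imp Eq.symm fun hT_pos => eq_and_eq_of_sq_add_le_three_mul ?_
  have hschur : (x + y + z) * T ≤ 9 * (x * y * z) :=
    h ▸ add_mul_two_mul_sub_sq_le_nine_mul hx hy hz
  have hmul : (x + y + z) ^ 2 * T ≤ 3 * T * T :=
    calc (x + y + z) ^ 2 * T = (x + y + z) * ((x + y + z) * T) := by ring
      _ ≤ (x + y + z) * (9 * (x * y * z)) := by gcongr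
      _ = 3 * T * T := by linear_combination (-3) * hT_sq
  rw [h]
  exact le_of_mul_le_mul_right hmul hT_pos

theorem two_mul_sub_sq_eq_iff {T : R} (hx : 0 ≤ x) (hy : 0 ≤ y) (hz : 0 ≤ z) (hT : 0 ≤ T)
    (hT_sq : T ^ 2 = 3 * ((x + y + z) * (x * y * z))) :
    2 * (x * y + y * z + z * x) - (x ^ 2 + y ^ 2 + z ^ 2) = T ↔
      (x = y ∧ y = z) ∨ (x = 0 ∧ y = z) ∨ (y = 0 ∧ z = x) ∨ (z = 0 ∧ x = y) := by
  constructor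
  · intro h
    rcases eq_zero_or_eq_and_eq_of_two_mul_sub_sq_eq hx hy hz hT hT_sq h with rfl | heq
    · have hprod : (x + y + z) * (x * y * z) = 0 := by linarith
      rcases mul_eq_zero.1 hprod with hsum | hxyz
      · exact .inl ⟨by linarith, by linarith⟩
      · exact .inr (zero_and_eq_of_mul_eq_zero_of_two_mul_sub_sq_eq_zero hxyz h)
    · exact .inl heq
  · intro h
    have hQ : 0 ≤ 2 * (x * y + y * z + z * x) - (x ^ 2 + y ^ 2 + z ^ 2) := by
      rcases h with ⟨rfl, rfl⟩ | ⟨rfl, rfl⟩ | ⟨rfl, rfl⟩ | ⟨rfl, rfl⟩ <;>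
        linarith [mul_nonneg hx hy]
    have hQ_sq : (2 * (x * y + y * z + z * x) - (x ^ 2 + y ^ 2 + z ^ 2)) ^ 2 =
        3 * ((x + y + z) * (x * y * z)) := by
      rcases h with ⟨rfl, rfl⟩ | ⟨rfl, rfl⟩ | ⟨rfl, rfl⟩ | ⟨rfl, rfl⟩ <;> ring
    exact (pow_left_inj₀ hQ hT two_ne_zero).1 (hQ_sq.trans hT_sq.symm)

end OrderedRing

/-- Equality case in the reverse Finsler–Hadwiger inequality: for a (possibly
degenerate) triangle with sides `a, b, c` not all zero and Heron area `S`, equality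
`a² + b² + c² = 3[(a−b)² + (b−c)² + (c−a)²] + 4√3·S` holds iff the triangle is
equilateral or is a degenerate isosceles triangle in which one side equals the sum
of the two others which are equal. -/
theorem reverse_finsler_hadwiger_equality (a b c S : ℝ)
    (ha : 0 ≤ a) (hb : 0 ≤ b) (hc : 0 ≤ c)
    (hab : a ≤ b + c) (hbc : b ≤ c + a) (hca : c ≤ a + b)
    (hne : ¬ (a = 0 ∧ b = 0 ∧ c = 0))
    (hS : 0 ≤ S)
    (heron : 16 * S ^ 2 = (a + b + c) * (-a + b + c) * (a - b + c) * (a + b - c)) :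
    a ^ 2 + b ^ 2 + c ^ 2 =
        3 * ((a - b) ^ 2 + (b - c) ^ 2 + (c - a) ^ 2) + 4 * Real.sqrt 3 * S ↔
      (a = b ∧ b = c) ∨ (b = c ∧ b = a / 2) ∨ (c = a ∧ c = b / 2) ∨
        (a = b ∧ a = c / 2) := by
  have hx : 0 ≤ -a + b + c := by linarith
  have hy : 0 ≤ a - b + c := by linarith
  have hz : 0 ≤ a + b - c := by linarith
  have hT_sq : (4 * √3 * S) ^ 2 = 3 * (((-a + b + c) + (a - b + c) + (a + b - c)) *
      ((-a + b + c) * (a - b + c) * (a + b - c))) := by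
    have h3 : √3 ^ 2 = (3 : ℝ) := Real.sq_sqrt zero_le_three
    linear_combination 16 * S ^ 2 * h3 + 3 * heron
  have hravi := two_mul_sub_sq_eq_iff hx hy hz (by positivity) hT_sq
  refine Iff.trans ⟨fun h => ?_, fun h => ?_⟩ (hravi.trans ?_)
  · linear_combination h
  · linear_combination h
  · refine or_congr ?_ (or_congr ?_ (or_congr ?_ ?_)) <;>
      constructor <;> rintro ⟨h₁, h₂⟩ <;> constructor <;> linarith
end

section
/- For every t ∈ [1/8, 1/2] and every s with 0 ≤ s ≤ φ₊(t), there exists a (possibly degenerate) triangle with side lengths a, b, c (not all zero) such that Q/(a+b+c)² = t and 12√3·S/(a+b+c)² = s; i.e. the vertical slice of the Blaschke–Santaló diagram at abscissa t ∈ [1/8, 1/2] is exactly the interval [0, φ₊(t)]. -/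
/-!
In the coordinates `x = -a + b + c`, `y = a - b + c`, `z = a + b - c`, scaled so that
`x + y + z = 1`, one has `Q = 1/2 - 3/2 (xy + yz + zx)` and `432 S² = 27 xyz`. With `k = √(2t)`, the
point `(t, s)` is therefore realised exactly when there are nonnegative `x, y, z` with
`x + y + z = 1`, `3 (xy + yz + zx) = 1 - k²` and `27 xyz = s²`. By Viète's trigonometric solution
such reals exist if `|s² - (1 - 3k²)| ≤ 2k³`, and since their elementary symmetric functions are
nonnegative, so are they. The two bounds on `s²` are `(1 + 2k)(1 - k)² = φ₊(t)²` and
`(1 - 2k)(1 + k)²`; the latter is nonpositive once `t ≥ 1/8`.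
-/

open Real

/-- The Blaschke–Santaló diagram of triangles: the set of pairs
`(Q / (a + b + c)², 12√3 S / (a + b + c)²)` over all possibly degenerate triangles. The area `S` is
encoded as the nonnegative solution of Heron's equation. -/
def blaschkeSantaloDiagram : Set (ℝ × ℝ) :=
  {p | ∃ a b c S : ℝ, 0 ≤ a ∧ 0 ≤ b ∧ 0 ≤ c ∧
    a ≤ b + c ∧ b ≤ c + a ∧ c ≤ a + b ∧
    ¬ (a = 0 ∧ b = 0 ∧ c = 0) ∧ 0 ≤ S ∧
    16 * S ^ 2 = (a + b + c) * (-a + b + c) * (a - b + c) * (a + b - c) ∧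
    ((a - b) ^ 2 + (b - c) ^ 2 + (c - a) ^ 2) / (a + b + c) ^ 2 = p.1 ∧
    12 * √3 * S / (a + b + c) ^ 2 = p.2}

theorem mem_blaschkeSantaloDiagram_of_sum_eq_one {x y z : ℝ} (hx : 0 ≤ x) (hy : 0 ≤ y)
    (hz : 0 ≤ z) (hsum : x + y + z = 1) :
    (1 / 2 - 3 / 2 * (x * y + y * z + z * x), √(27 * (x * y * z))) ∈ blaschkeSantaloDiagram := by
  have hperimeter : (y + z) / 2 + (z + x) / 2 + (x + y) / 2 = 1 := by linarith
  have hxyz : 0 ≤ x * y * z := by positivity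
  refine ⟨(y + z) / 2, (z + x) / 2, (x + y) / 2, √(x * y * z) / 4, by positivity, by positivity,
    by positivity, by linarith, by linarith, by linarith, ?_, by positivity, ?_, ?_, ?_⟩
  · rintro ⟨ha, hb, -⟩
    linarith
  · rw [hperimeter, div_pow, sq_sqrt hxyz]
    ring
  · rw [hperimeter]
    linear_combination (x + y + z + 1) / 2 * hsum
  · have hsqrt : √27 = 3 * √3 := by
      rw [show (27 : ℝ) = 3 ^ 2 * 3 by norm_num, sqrt_mul (by positivity), sqrt_sq (by norm_num)]
    rw [hperimeter, sqrt_mul (by norm_num : (0 : ℝ) ≤ 27), hsqrt]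
    ring

theorem nonneg_of_elementary_symmetric_nonneg {R : Type*} [CommRing R] [LinearOrder R]
    [IsStrictOrderedRing R] {x y z : R} (h₁ : 0 ≤ x + y + z) (h₂ : 0 ≤ x * y + y * z + z * x)
    (h₃ : 0 ≤ x * y * z) : 0 ≤ x ∧ 0 ≤ y ∧ 0 ≤ z := by
  have nonneg_of_root (r : R)
      (hroot : r ^ 3 - (x + y + z) * r ^ 2 + (x * y + y * z + z * x) * r - x * y * z = 0) :
      0 ≤ r := by
    by_contra! hr
    have hcube : r ^ 3 < 0 := Odd.pow_neg (by decide) hr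
    have hsquare : 0 ≤ (x + y + z) * r ^ 2 := mul_nonneg h₁ (sq_nonneg r)
    have hlinear : (x * y + y * z + z * x) * r ≤ 0 := mul_nonpos_of_nonneg_of_nonpos h₂ hr.le
    linarith
  exact ⟨nonneg_of_root x (by ring), nonneg_of_root y (by ring), nonneg_of_root z (by ring)⟩

theorem exists_mul_cos_eq {r v : ℝ} (h : |v| ≤ r) : ∃ θ, r * cos θ = v := by
  rcases ((abs_nonneg v).trans h).eq_or_lt with rfl | hr
  · exact ⟨0, by simp [abs_nonpos_iff.mp h]⟩
  · obtain ⟨hlow, hhigh⟩ := abs_le.mp h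
    refine ⟨arccos (v / r), ?_⟩
    rw [cos_arccos ((le_div_iff₀ hr).mpr (by linarith)) ((div_le_one hr).mpr hhigh),
      mul_div_cancel₀ v hr.ne']

theorem exists_roots_depressed_cubic {k m : ℝ} (h : |m| ≤ 2 * k ^ 3) :
    ∃ u v w : ℝ, u + v + w = 0 ∧ u * v + v * w + w * u = -3 * k ^ 2 ∧ u * v * w = m := by
  obtain ⟨θ, hθ⟩ := exists_mul_cos_eq h
  have hcos : 2 * k ^ 3 * (4 * cos (θ / 3) ^ 3 - 3 * cos (θ / 3)) = m := by
    rw [← cos_three_mul, mul_div_cancel₀ θ three_ne_zero, hθ]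
  have hsqrt : √3 ^ 2 = 3 := sq_sqrt (by norm_num)
  have hcircle : sin (θ / 3) ^ 2 = 1 - cos (θ / 3) ^ 2 := sin_sq _
  -- The roots are `2k cos φ` and `2k cos (φ ± 2π/3)` with `φ = θ/3`.
  refine ⟨2 * k * cos (θ / 3), -k * cos (θ / 3) - √3 * k * sin (θ / 3),
    -k * cos (θ / 3) + √3 * k * sin (θ / 3), by ring, ?_, ?_⟩
  · linear_combination -k ^ 2 * sin (θ / 3) ^ 2 * hsqrt - 3 * k ^ 2 * hcircle
  · linear_combination hcos - 2 * k ^ 3 * cos (θ / 3) * sin (θ / 3) ^ 2 * hsqrt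
      - 6 * k ^ 3 * cos (θ / 3) * hcircle

theorem exists_nonneg_of_elementary_symmetric {k p : ℝ} (hk : k ^ 2 ≤ 1) (hp : 0 ≤ p)
    (h : |p - (1 - 3 * k ^ 2)| ≤ 2 * k ^ 3) :
    ∃ x y z : ℝ, 0 ≤ x ∧ 0 ≤ y ∧ 0 ≤ z ∧ x + y + z = 1 ∧
      3 * (x * y + y * z + z * x) = 1 - k ^ 2 ∧ 27 * (x * y * z) = p := by
  obtain ⟨u, v, w, hsum, hpairs, hprod⟩ := exists_roots_depressed_cubic h
  obtain ⟨x, rfl⟩ : ∃ x, u = 3 * x - 1 := ⟨(1 + u) / 3, by ring⟩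
  obtain ⟨y, rfl⟩ : ∃ y, v = 3 * y - 1 := ⟨(1 + v) / 3, by ring⟩
  obtain ⟨z, rfl⟩ : ∃ z, w = 3 * z - 1 := ⟨(1 + w) / 3, by ring⟩
  have h₁ : x + y + z = 1 := by linarith
  have h₂ : 3 * (x * y + y * z + z * x) = 1 - k ^ 2 := by
    linear_combination hpairs / 3 + 2 * h₁
  have h₃ : 27 * (x * y * z) = p := by
    linear_combination hprod + 3 * h₂ - 3 * h₁
  obtain ⟨hx, hy, hz⟩ : 0 ≤ x ∧ 0 ≤ y ∧ 0 ≤ z :=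
    nonneg_of_elementary_symmetric_nonneg (by linarith) (by linarith) (by linarith)
  exact ⟨x, y, z, hx, hy, hz, h₁, h₂, h₃⟩

theorem four_mul_sqrt_two_mul_rpow_three_halves {t : ℝ} (ht : 0 ≤ t) :
    4 * √2 * t ^ ((3 : ℝ) / 2) = 2 * √(2 * t) ^ 3 := by
  have hrpow : t ^ ((3 : ℝ) / 2) = √t ^ 3 := by
    rw [rpow_div_two_eq_sqrt 3 ht]
    exact_mod_cast rpow_natCast (√t) 3
  rw [hrpow, sqrt_mul zero_le_two]
  linear_combination -2 * √2 * √t ^ 3 * sq_sqrt (zero_le_two (α := ℝ))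

theorem upper_radicand_nonneg {t : ℝ} (ht : 0 ≤ t) :
    0 ≤ 1 - 6 * t + 4 * √2 * t ^ ((3 : ℝ) / 2) := by
  rw [four_mul_sqrt_two_mul_rpow_three_halves ht]
  calc
    0 ≤ (1 + 2 * √(2 * t)) * (1 - √(2 * t)) ^ 2 := by positivity
    _ = 1 - 6 * t + 2 * √(2 * t) ^ 3 := by
      linear_combination -3 * sq_sqrt (show 0 ≤ 2 * t by positivity)

theorem lower_radicand_nonpos {t : ℝ} (ht : 1 / 8 ≤ t) :
    1 - 6 * t - 4 * √2 * t ^ ((3 : ℝ) / 2) ≤ 0 := by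
  have hk : 1 / 2 ≤ √(2 * t) := le_sqrt_of_sq_le (by linarith)
  rw [four_mul_sqrt_two_mul_rpow_three_halves (by linarith)]
  calc
    1 - 6 * t - 2 * √(2 * t) ^ 3 = (1 - 2 * √(2 * t)) * (1 + √(2 * t)) ^ 2 := by
      linear_combination 3 * sq_sqrt (show 0 ≤ 2 * t by linarith)
    _ ≤ 0 := mul_nonpos_of_nonpos_of_nonneg (by linarith) (sq_nonneg _)

/- For `t > 1/8` the left-hand radicand is negative, so `Real.sqrt` truncates the lower bound
to `0`. -/
theorem vertical_slice_large_X_general {t s : ℝ} (ht0 : 0 ≤ t) (ht1 : t ≤ 1 / 2)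
    (hs1 : √(1 - 6 * t - 4 * √2 * t ^ ((3 : ℝ) / 2)) ≤ s)
    (hs2 : s ≤ √(1 - 6 * t + 4 * √2 * t ^ ((3 : ℝ) / 2))) :
    (t, s) ∈ blaschkeSantaloDiagram := by
  have hs0 : 0 ≤ s := (sqrt_nonneg _).trans hs1
  have hk : √(2 * t) ^ 2 = 2 * t := sq_sqrt (by linarith)
  have hbound : |s ^ 2 - (1 - 3 * √(2 * t) ^ 2)| ≤ 2 * √(2 * t) ^ 3 := by
    have hlower := (sqrt_le_left hs0).mp hs1
    have hupper := (le_sqrt hs0 (upper_radicand_nonneg ht0)).mp hs2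
    rw [four_mul_sqrt_two_mul_rpow_three_halves ht0] at hlower hupper
    exact abs_le.mpr ⟨by linarith, by linarith⟩
  obtain ⟨x, y, z, hx, hy, hz, hsum, hpairs, hprod⟩ :=
    exists_nonneg_of_elementary_symmetric (by linarith) (sq_nonneg s) hbound
  have hmem := mem_blaschkeSantaloDiagram_of_sum_eq_one hx hy hz hsum
  rwa [show 1 / 2 - 3 / 2 * (x * y + y * z + z * x) = t by linarith, hprod, sqrt_sq hs0] at hmem

/-- For `t ∈ [1/8, 1/2]`, the vertical slice of the Blaschke–Santaló diagram at
abscissa `t` fills the interval `[0, φ₊(t)]`: for every `s` with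
`0 ≤ s ≤ φ₊(t)` there exists a (possibly degenerate) triangle with
`Q/(a+b+c)² = t` and `12√3·S/(a+b+c)² = s`. -/
theorem vertical_slice_large_X (t s : ℝ) (ht0 : 1 / 8 ≤ t) (ht1 : t ≤ 1 / 2)
    (hs1 : 0 ≤ s)
    (hs2 : s ≤ Real.sqrt (1 - 6 * t + 4 * Real.sqrt 2 * t ^ ((3 : ℝ) / 2))) :
    ∃ a b c S : ℝ, 0 ≤ a ∧ 0 ≤ b ∧ 0 ≤ c ∧
      a ≤ b + c ∧ b ≤ c + a ∧ c ≤ a + b ∧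
      ¬ (a = 0 ∧ b = 0 ∧ c = 0) ∧ 0 ≤ S ∧
      16 * S ^ 2 = (a + b + c) * (-a + b + c) * (a - b + c) * (a + b - c) ∧
      ((a - b) ^ 2 + (b - c) ^ 2 + (c - a) ^ 2) / (a + b + c) ^ 2 = t ∧
      12 * Real.sqrt 3 * S / (a + b + c) ^ 2 = s := by
  rw [← sqrt_eq_zero_of_nonpos (lower_radicand_nonpos ht0)] at hs1
  exact vertical_slice_large_X_general (by linarith) ht1 hs1 hs2
end
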